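/- Let γ ∈ (0,1]. There is a constant C depending only on γ with the following property. Let h > 0, T = [0,h]³, and let T = T⁻ ∪ T⁺ be a partition of T into two disjoint Lebesgue-measurable sets. Fix F ∈ ℝ³, a unit vector n̄, and 0 < β⁻ ≤ β⁺, and suppose there exists a tetrahedron P with P ⊆ T⁻, vol(P) ≥ γh³, and F ∈ closure(P). Let f be a closed face of the cube T with unit normal n_f, and let f = f⁻ ∪ f⁺ be any partition of f into two H²-measurable sets. Then for every p ∈ Q₁, writing q = C_T(p), one has ( ∫_{f⁻} (∇p·n_f)² dH² + ∫_{f⁺} (∇q·n_f)² dH² )^{1/2} ≤ C h^{−1/2} ( ‖∇p‖²_{L²(T⁻)} + ‖∇q‖²_{L²(T⁺)} )^{1/2}. (This is the trace inequality (4.6a) of Theorem 4.5 for trilinear IFE functions, in the case where the subelement carrying the coefficient β⁻ contains a tetrahedron of uniformly comparable volume whose closure contains F.) -/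

import Mathlib

/-!
The trace inequality follows from an inverse estimate on `T⁻` alone. The partial derivatives of
`p ∈ Q₁` are trilinear, and a trilinear `g` satisfies the norming inequality
`sup_T g² ≤ C(γ) h⁻³ ∫_S g²` for every measurable `S ⊆ T` with `vol S ≥ γ h³` (`q1_remez`). Its
proof is a Remez-type argument: a function affine in each variable can only be much smaller than
one of its values on a set of small volume (`affine_sublevel`, `q1_sublevel`). Consequently every
partial derivative of `p` is bounded on all of `T` by `D`, where `D² ≤ C(γ) h⁻³ ‖∇p‖²_{L²(T⁻)}`.

Since the tetrahedron has its closure in the closed cube, `F ∈ T`, so the correction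
`(β⁻/β⁺ - 1)(∇p(F)·n̄) n̄` to the gradient has length at most `3 D`, as `0 < β⁻ ≤ β⁺`. Thus both
normal derivatives are at most `4 D` on the face, whose `H²` measure is at most `4 h²`
(`hausdorff_slab`), and the squared left-hand side is at most `64 D² h²`, of order `h⁻¹`. The term
on `T⁺` is only needed to be nonnegative.
-/

open MeasureTheory
open scoped RealInnerProductSpace ENNReal

noncomputable section

abbrev V3 : Type := EuclideanSpace ℝ (Fin 3)

/-- `Q₁`: the space of trilinear polynomials on `ℝ³`. -/
def IsQ1 (p : V3 → ℝ) : Prop :=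
  ∃ a₀ a₁ a₂ a₃ a₄ a₅ a₆ a₇ : ℝ, ∀ x : V3,
    p x = a₀ + a₁ * x 0 + a₂ * x 1 + a₃ * x 2
      + a₄ * (x 0 * x 1) + a₅ * (x 0 * x 2) + a₆ * (x 1 * x 2)
      + a₇ * (x 0 * x 1 * x 2)

/-- The cube `T = [0,h]³`. -/
def cube (h : ℝ) : Set V3 := {X | ∀ i, X i ∈ Set.Icc (0:ℝ) h}

/-- `P` is a tetrahedron: the convex hull of four affinely independent points. -/
def IsTetra (P : Set V3) : Prop :=
  ∃ v : Fin 4 → V3, AffineIndependent ℝ v ∧ P = convexHull ℝ (Set.range v)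

/-- The extension operator `C_T(p) = p + (β⁻/β⁺ − 1)(∇p(F)·n̄) L`, `L(X) = (X−F)·n̄`. -/
def CT (βm βp : ℝ) (F nbar : V3) (p : V3 → ℝ) : V3 → ℝ :=
  fun X => p X + (βm / βp - 1) * (fderiv ℝ p F nbar) * ⟪X - F, nbar⟫

/-- `f` is a closed face of the cube `[0,h]³` with unit normal `nf`. -/
def IsFace (h : ℝ) (f : Set V3) (nf : V3) : Prop :=
  ∃ i : Fin 3, (nf = EuclideanSpace.single i 1 ∨ nf = -EuclideanSpace.single i 1) ∧
    (f = {X ∈ cube h | X i = 0} ∨ f = {X ∈ cube h | X i = h})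

open Set Function

/-! ### Sublevel sets of trilinear functions -/

/-- Fubini in one coordinate direction: if every line parallel to the `i`-th axis meets `S ⊆ [0,h]³`
in a set of length at most `c`, then `vol S ≤ c h²`. -/
theorem slice_bound {h : ℝ} (i : Fin 3) {S : Set V3} (hS : MeasurableSet S) (hSc : S ⊆ cube h)
    {c : ℝ≥0∞} (hc : ∀ Y : Fin 3 → ℝ, volume {t : ℝ | WithLp.toLp 2 (update Y i t) ∈ S} ≤ c) :
    volume S ≤ c * ENNReal.ofReal h ^ 2 := by
  have e1 := (PiLp.volume_preserving_toLp (Fin 3)).measure_preimage hS.nullMeasurableSet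
  set S' : Set (Fin 3 → ℝ) := WithLp.toLp 2 ⁻¹' S with hS'
  have hS'm : MeasurableSet S' := (PiLp.volume_preserving_toLp (Fin 3)).measurable hS
  have e2 := ((volume_preserving_piFinSuccAbove (fun _ : Fin 3 => ℝ) i).symm).measure_preimage
    hS'm.nullMeasurableSet
  rw [← e1, ← e2]
  set R := (MeasurableEquiv.piFinSuccAbove (fun _ : Fin 3 => ℝ) i).symm ⁻¹' S' with hR
  have hRm : MeasurableSet R := (MeasurableEquiv.measurable _) hS'm
  rw [Measure.volume_eq_prod, Measure.prod_apply_symm hRm]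
  have hsec : ∀ y : Fin 2 → ℝ, volume ((fun x : ℝ => (x, y)) ⁻¹' R) ≤
      (Icc (0 : Fin 2 → ℝ) (fun _ => h)).indicator (fun _ => c) y := by
    intro y
    by_cases hy : y ∈ Icc (0 : Fin 2 → ℝ) (fun _ => h)
    · rw [indicator_of_mem hy]
      convert hc (i.insertNth (0 : ℝ) y) using 2
      ext t
      simp only [mem_preimage, hR, hS', mem_ofPred_eq, Fin.update_insertNth]
      rfl
    · rw [indicator_of_notMem hy]
      refine le_of_eq ?_
      convert measure_empty (μ := (volume : Measure ℝ))
      ext t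
      simp only [mem_empty_iff_false, iff_false]
      intro ht
      apply hy
      have hm : WithLp.toLp 2 (i.insertNth (α := fun _ => ℝ) t y) ∈ cube h := hSc ht
      refine ⟨fun j => ?_, fun j => ?_⟩
      · have := (hm (i.succAbove j)).1
        simpa using! this
      · have := (hm (i.succAbove j)).2
        simpa using! this
  refine (lintegral_mono hsec).trans ?_
  rw [lintegral_indicator measurableSet_Icc]
  simp [Real.volume_Icc_pi]

/-- One-dimensional Remez-type bound. Two points `x`, `y` of the sublevel set satisfy
`|b| |x - y| ≤ 2 ε m`, while `|b| h ≥ m - ε m ≥ m / 2` because the value at `v` has modulus at least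
`m`; hence the set has diameter at most `4 ε h`. -/
theorem affine_sublevel {a b v h ε m : ℝ} (hv : v ∈ Icc 0 h) (hm : 0 < m)
    (hε : ε ≤ 1 / 2) (hε0 : 0 ≤ ε) (hab : m ≤ |a + b * v|) :
    volume {x : ℝ | x ∈ Icc 0 h ∧ |a + b * x| ≤ ε * m} ≤ ENNReal.ofReal (4 * ε * h) := by
  refine (Real.volume_le_diam _).trans (Metric.ediam_le ?_)
  rintro x ⟨hx, hx'⟩ y ⟨hy, hy'⟩
  rw [edist_dist, Real.dist_eq]
  apply ENNReal.ofReal_le_ofReal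
  have h0 : 0 ≤ h := hv.1.trans hv.2
  have hxv : |x - v| ≤ h := abs_sub_le_iff.2 ⟨by linarith [hx.2, hv.1], by linarith [hv.2, hx.1]⟩
  have k1 : m ≤ ε * m + |b| * h := by
    have : a + b * v = (a + b * x) - b * (x - v) := by ring
    rw [this] at hab
    have h1 := abs_sub (a + b * x) (b * (x - v))
    rw [abs_mul] at h1
    nlinarith [abs_nonneg b]
  have k2 : |b| * |x - y| ≤ 2 * ε * m := by
    rw [← abs_mul]
    have : b * (x - y) = (a + b * x) - (a + b * y) := by ring
    rw [this]
    linarith [abs_sub (a + b * x) (a + b * y)]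
  have k3 : m ≤ 2 * (|b| * h) := by nlinarith
  have k4 : |b| * |x - y| ≤ |b| * (4 * ε * h) := by nlinarith
  have hb : 0 < |b| := by
    by_contra hb
    have : |b| = 0 := le_antisymm (not_lt.1 hb) (abs_nonneg b)
    rw [this] at k3; linarith
  exact le_of_mul_le_mul_left k4 hb

theorem isQ1_continuous {g : V3 → ℝ} (hg : IsQ1 g) : Continuous g := by
  obtain ⟨a₀, a₁, a₂, a₃, a₄, a₅, a₆, a₇, h⟩ := hg
  rw [funext h]; fun_prop

theorem isClosed_cube (h : ℝ) : IsClosed (cube h) := by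
  have : cube h = ⋂ i, (fun X : V3 => X i) ⁻¹' Icc 0 h := by ext; simp [cube]
  rw [this]
  exact isClosed_iInter fun i => isClosed_Icc.preimage (by fun_prop)

theorem isCompact_cube (h : ℝ) : IsCompact (cube h) := by
  refine Metric.isCompact_of_isClosed_isBounded (isClosed_cube h) ?_
  have : cube h ⊆ WithLp.toLp 2 '' (Icc (0 : Fin 3 → ℝ) (fun _ => h)) := fun Y hY =>
    ⟨Y.ofLp, ⟨fun i => (hY i).1, fun i => (hY i).2⟩, rfl⟩
  exact (isCompact_Icc.image (PiLp.continuous_toLp 2 _)).isBounded.subset this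

theorem volume_cube (h : ℝ) : volume (cube h) ≤ ENNReal.ofReal h ^ 3 := by
  rw [← (PiLp.volume_preserving_toLp (Fin 3)).measure_preimage
    (isClosed_cube h).measurableSet.nullMeasurableSet]
  have : (WithLp.toLp 2 ⁻¹' cube h : Set (Fin 3 → ℝ)) = Icc 0 (fun _ => h) := by
    ext x; simp [cube, Pi.le_def, forall_and]
  rw [this]; simp [Real.volume_Icc_pi]

/-- A trilinear function which is nonzero at one point `X` of the cube is smaller than `ε³ |g X|` only
on a set of volume at most `12 ε h³`. The coordinates of `X` are replaced by those of `Y` one at a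
time; if `|g Y| ≤ ε³ |g X|`, one of the three replacements decreases the modulus from at least
`ε ^ k |g X|` to at most `ε ^ (k + 1) |g X|`, and `affine_sublevel` applies along that direction. -/
theorem q1_sublevel {g : V3 → ℝ} (hg : IsQ1 g) {h ε : ℝ} (hh : 0 < h) {X : V3} (hX : X ∈ cube h)
    (hε0 : 0 < ε) (hε : ε ≤ 1 / 2) (hgX : g X ≠ 0) :
    volume {Y : V3 | Y ∈ cube h ∧ |g Y| ≤ ε ^ 3 * |g X|} ≤ ENNReal.ofReal (12 * ε * h ^ 3) := by
  have hgc := isQ1_continuous hg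
  obtain ⟨a₀, a₁, a₂, a₃, a₄, a₅, a₆, a₇, hq⟩ := hg
  set M := |g X| with hM
  have hMp : 0 < M := abs_pos.2 hgX
  -- `A Y` and `B Y` are the intermediate points between `X` and `Y`
  let A : V3 → V3 := fun Y => !₂[Y 0, X 1, X 2]
  let B : V3 → V3 := fun Y => !₂[Y 0, Y 1, X 2]
  have hAc : Continuous fun Y => |g (A Y)| := by
    refine (hgc.comp ?_).abs
    simp only [A]; fun_prop
  have hBc : Continuous fun Y => |g (B Y)| := by
    refine (hgc.comp ?_).abs
    simp only [B]; fun_prop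
  let S0 : Set V3 := cube h ∩ {Y | |g (A Y)| ≤ ε * M}
  let S1 : Set V3 := cube h ∩ ({Y | ε * M ≤ |g (A Y)|} ∩ {Y | |g (B Y)| ≤ ε * (ε * M)})
  let S2 : Set V3 := cube h ∩ ({Y | ε * (ε * M) ≤ |g (B Y)|} ∩ {Y | |g Y| ≤ ε * (ε * (ε * M))})
  have hS0 : MeasurableSet S0 :=
    ((isClosed_cube h).inter (isClosed_le hAc continuous_const)).measurableSet
  have hS1 : MeasurableSet S1 := ((isClosed_cube h).inter ((isClosed_le continuous_const hAc).inter
    (isClosed_le hBc continuous_const))).measurableSet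
  have hS2 : MeasurableSet S2 := ((isClosed_cube h).inter ((isClosed_le continuous_const hBc).inter
    (isClosed_le hgc.abs continuous_const))).measurableSet
  have hsub : {Y : V3 | Y ∈ cube h ∧ |g Y| ≤ ε ^ 3 * M} ⊆ S0 ∪ (S1 ∪ S2) := by
    rintro Y ⟨hY, hY'⟩
    rcases le_total |g (A Y)| (ε * M) with h1 | h1
    · exact Or.inl ⟨hY, h1⟩
    rcases le_total |g (B Y)| (ε * (ε * M)) with h2 | h2
    · exact Or.inr (Or.inl ⟨hY, h1, h2⟩)
    · exact Or.inr (Or.inr ⟨hY, h2, hY'.trans_eq (by ring)⟩)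
  have b0 : volume S0 ≤ ENNReal.ofReal (4 * ε * h) * ENNReal.ofReal h ^ 2 := by
    refine slice_bound 0 hS0 inter_subset_left fun Y => ?_
    refine (measure_mono ?_).trans (affine_sublevel (hX 0) hMp hε hε0.le
      (a := a₀ + a₂ * X 1 + a₃ * X 2 + a₆ * (X 1 * X 2))
      (b := a₁ + a₄ * X 1 + a₅ * X 2 + a₇ * (X 1 * X 2)) (le_of_eq ?_))
    · rintro t ⟨ht, ht'⟩
      refine ⟨by simpa using ht 0, ?_⟩
      simp only [mem_ofPred_eq, hq, A] at ht'
      simp at ht'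
      convert ht' using 2; ring
    · rw [hM, hq]; congr 1; ring
  have b1 : volume S1 ≤ ENNReal.ofReal (4 * ε * h) * ENNReal.ofReal h ^ 2 := by
    refine slice_bound 1 hS1 inter_subset_left fun Y => ?_
    by_cases hb : ε * M ≤ |(a₀ + a₁ * Y 0 + a₃ * X 2 + a₅ * (Y 0 * X 2)) +
        (a₂ + a₄ * Y 0 + a₆ * X 2 + a₇ * (Y 0 * X 2)) * X 1|
    · refine (measure_mono ?_).trans (affine_sublevel (hX 1) (mul_pos hε0 hMp) hε hε0.le hb)
      rintro t ⟨ht, -, ht'⟩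
      refine ⟨by simpa using ht 1, ?_⟩
      simp only [mem_ofPred_eq, hq, B] at ht'
      simp at ht'
      convert ht' using 2; ring
    -- otherwise the section is empty: the lower bound in its definition does not involve `t`
    · refine le_of_eq_of_le ?_ zero_le
      convert measure_empty (μ := (volume : Measure ℝ))
      ext t
      simp only [mem_empty_iff_false, iff_false]
      rintro ⟨-, ht, -⟩
      apply hb
      simp only [mem_ofPred_eq, hq, A] at ht
      simp at ht
      convert ht using 2; ring
  have b2 : volume S2 ≤ ENNReal.ofReal (4 * ε * h) * ENNReal.ofReal h ^ 2 := by
    refine slice_bound 2 hS2 inter_subset_left fun Y => ?_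
    by_cases hb : ε * (ε * M) ≤ |(a₀ + a₁ * Y 0 + a₂ * Y 1 + a₄ * (Y 0 * Y 1)) +
        (a₃ + a₅ * Y 0 + a₆ * Y 1 + a₇ * (Y 0 * Y 1)) * X 2|
    · refine (measure_mono ?_).trans (affine_sublevel (hX 2) (mul_pos hε0 (mul_pos hε0 hMp))
        hε hε0.le hb)
      rintro t ⟨ht, -, ht'⟩
      refine ⟨by simpa using ht 2, ?_⟩
      simp only [mem_ofPred_eq, hq] at ht'
      simp at ht'
      convert ht' using 2; ring
    -- otherwise the section is empty: the lower bound in its definition does not involve `t`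
    · refine le_of_eq_of_le ?_ zero_le
      convert measure_empty (μ := (volume : Measure ℝ))
      ext t
      simp only [mem_empty_iff_false, iff_false]
      rintro ⟨-, ht, -⟩
      apply hb
      simp only [mem_ofPred_eq, hq, B] at ht
      simp at ht
      convert ht using 2; ring
  have hval : ENNReal.ofReal (4 * ε * h) * ENNReal.ofReal h ^ 2 =
      ENNReal.ofReal (4 * ε * h ^ 3) := by
    rw [← ENNReal.ofReal_pow hh.le, ← ENNReal.ofReal_mul (by positivity)]; congr 1; ring
  rw [hval] at b0 b1 b2
  calc _ ≤ volume (S0 ∪ (S1 ∪ S2)) := measure_mono hsub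
    _ ≤ volume S0 + (volume S1 + volume S2) :=
      (measure_union_le _ _).trans (add_le_add_right (measure_union_le _ _) _)
    _ ≤ _ := add_le_add b0 (add_le_add b1 b2)
    _ = _ := by
      rw [← ENNReal.ofReal_add (by positivity) (by positivity),
        ← ENNReal.ofReal_add (by positivity) (by positivity)]
      congr 1; ring

/-! ### The norming inequality and the gradient bound -/

/-- Norming inequality: the `L²` norm of a trilinear function over any measurable part of the cube of
volume at least `γ h³` controls its values everywhere on the cube. With `ε = γ / 24`, the set
where `g` is small in the sense of `q1_sublevel` has volume at most `γ h³ / 2`. -/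
theorem q1_remez {γ : ℝ} (hγ0 : 0 < γ) (hγ1 : γ ≤ 1) {g : V3 → ℝ} (hg : IsQ1 g) {h : ℝ}
    (hh : 0 < h) {S : Set V3} (hS : MeasurableSet S) (hSc : S ⊆ cube h)
    (hvol : ENNReal.ofReal (γ * h ^ 3) ≤ volume S) {X : V3} (hX : X ∈ cube h) :
    ((γ / 24) ^ 6 * (γ / 2)) * h ^ 3 * g X ^ 2 ≤ ∫ Y in S, g Y ^ 2 := by
  by_cases hgX : g X = 0
  · simp only [hgX, ne_eq, OfNat.ofNat_ne_zero, not_false_eq_true, zero_pow, mul_zero]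
    exact integral_nonneg fun _ => sq_nonneg _
  have hgc := isQ1_continuous hg
  have hfin : volume (cube h) < ⊤ := (volume_cube h).trans_lt (by finiteness)
  have hbad := q1_sublevel hg hh hX (ε := γ / 24) (by positivity) (by linarith) hgX
  set bad := {Y : V3 | Y ∈ cube h ∧ |g Y| ≤ (γ / 24) ^ 3 * |g X|} with hbaddef
  have hbadm : MeasurableSet bad :=
    ((isClosed_cube h).inter (isClosed_le hgc.abs continuous_const)).measurableSet
  have hSfin : volume S ≠ ⊤ := ((measure_mono hSc).trans_lt hfin).ne
  have hDfin : volume (S \ bad) ≠ ⊤ := ((measure_mono sdiff_subset).trans_lt hSfin.lt_top).ne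
  have hint : IntegrableOn (fun Y => g Y ^ 2) S := by
    exact ((hgc.pow 2).continuousOn.integrableOn_compact (isCompact_cube h)).mono_set hSc
  have hlow : γ / 2 * h ^ 3 ≤ volume.real (S \ bad) := by
    have h1 : γ * h ^ 3 ≤ volume.real S := by
      rw [Measure.real, ← ENNReal.ofReal_le_iff_le_toReal hSfin]; exact hvol
    have h2 : volume.real bad ≤ 12 * (γ / 24) * h ^ 3 :=
      ENNReal.toReal_le_of_le_ofReal (by positivity) hbad
    have h3 := le_measureReal_sdiff (μ := volume) (s₁ := S) (s₂ := bad)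
      (h := ((measure_mono (inter_subset_left : cube h ∩ _ ⊆ cube h)).trans_lt hfin).ne)
    linarith
  have hc : ∀ Y ∈ S \ bad, ((γ / 24) ^ 3 * |g X|) ^ 2 ≤ g Y ^ 2 := by
    rintro Y ⟨hY, hY'⟩
    rw [← sq_abs (g Y)]
    refine pow_le_pow_left₀ (by positivity) ?_ 2
    by_contra hlt
    exact hY' ⟨hSc hY, (not_le.1 hlt).le⟩
  have h4 := setIntegral_ge_of_const_le_real (hS.diff hbadm) hDfin hc (hint.mono_set sdiff_subset)
  have h5 : ∫ Y in S \ bad, g Y ^ 2 ≤ ∫ Y in S, g Y ^ 2 :=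
    setIntegral_mono_set hint (Filter.Eventually.of_forall fun _ => sq_nonneg _)
      (LE.le.eventuallyLE sdiff_subset)
  calc _ = ((γ / 24) ^ 3 * |g X|) ^ 2 * (γ / 2 * h ^ 3) := by rw [mul_pow, sq_abs]; ring
    _ ≤ ((γ / 24) ^ 3 * |g X|) ^ 2 * volume.real (S \ bad) := by gcongr
    _ ≤ _ := h4.trans h5

/-- The partial derivatives of a function in `Q₁` are again in `Q₁`. -/
theorem q1_gradient {p : V3 → ℝ} (hp : IsQ1 p) :
    Differentiable ℝ p ∧ ∃ d : Fin 3 → V3 → ℝ, (∀ i, IsQ1 (d i)) ∧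
      ∀ X v, fderiv ℝ p X v = ∑ i, d i X * v i := by
  obtain ⟨a₀, a₁, a₂, a₃, a₄, a₅, a₆, a₇, hq⟩ := hp
  have key : ∀ X : V3, HasFDerivAt p
      ((a₁ + a₄ * X 1 + a₅ * X 2 + a₇ * (X 1 * X 2)) • (EuclideanSpace.proj 0 : V3 →L[ℝ] ℝ) +
       (a₂ + a₄ * X 0 + a₆ * X 2 + a₇ * (X 0 * X 2)) • (EuclideanSpace.proj 1 : V3 →L[ℝ] ℝ) +
       (a₃ + a₅ * X 0 + a₆ * X 1 + a₇ * (X 0 * X 1)) • (EuclideanSpace.proj 2 : V3 →L[ℝ] ℝ)) X := by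
    intro X
    rw [funext hq]
    have c : ∀ i, HasFDerivAt (fun Y : V3 => Y i) (EuclideanSpace.proj i : V3 →L[ℝ] ℝ) X :=
      fun i => (EuclideanSpace.proj i : V3 →L[ℝ] ℝ).hasFDerivAt
    have := ((((((((c 0).const_mul a₁).const_add a₀).add ((c 1).const_mul a₂)).add
      ((c 2).const_mul a₃)).add (((c 0).mul (c 1)).const_mul a₄)).add
      (((c 0).mul (c 2)).const_mul a₅)).add (((c 1).mul (c 2)).const_mul a₆)).add
      ((((c 0).mul (c 1)).mul (c 2)).const_mul a₇)
    refine this.congr_fderiv ?_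
    ext v
    simp
    ring
  refine ⟨fun X => (key X).differentiableAt,
    ![fun X => a₁ + a₄ * X 1 + a₅ * X 2 + a₇ * (X 1 * X 2),
      fun X => a₂ + a₄ * X 0 + a₆ * X 2 + a₇ * (X 0 * X 2),
      fun X => a₃ + a₅ * X 0 + a₆ * X 1 + a₇ * (X 0 * X 1)], ?_, ?_⟩
  · intro i
    fin_cases i
    · exact ⟨a₁, 0, a₄, a₅, 0, 0, a₇, 0, fun x => by simp⟩
    · exact ⟨a₂, a₄, 0, a₆, 0, a₇, 0, 0, fun x => by simp⟩
    · exact ⟨a₃, a₅, a₆, 0, a₇, 0, 0, 0, fun x => by simp⟩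
  · intro X v
    rw [(key X).fderiv, Fin.sum_univ_three]
    simp

/-- `q1_remez` for the partial derivatives of `p`, with `∂ⱼp` bounded by `‖∇p‖` in the integral. -/
theorem gradient_bound {γ : ℝ} (hγ0 : 0 < γ) (hγ1 : γ ≤ 1) {p : V3 → ℝ} (hp : IsQ1 p) {h : ℝ}
    (hh : 0 < h) {S : Set V3} (hS : MeasurableSet S) (hSc : S ⊆ cube h)
    (hvol : ENNReal.ofReal (γ * h ^ 3) ≤ volume S) {X : V3} (hX : X ∈ cube h) (j : Fin 3) :
    |fderiv ℝ p X (EuclideanSpace.single j 1)| ≤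
      Real.sqrt ((∫ Y in S, ‖fderiv ℝ p Y‖ ^ 2) / (((γ / 24) ^ 6 * (γ / 2)) * h ^ 3)) := by
  obtain ⟨-, d, hd, hfd⟩ := q1_gradient hp
  have hdj : ∀ Y, fderiv ℝ p Y (EuclideanSpace.single j 1) = d j Y := by
    intro Y; rw [hfd]; simp
  apply Real.abs_le_sqrt
  rw [le_div_iff₀ (by positivity), mul_comm, hdj]
  refine (q1_remez hγ0 hγ1 (hd j) hh hS hSc hvol hX).trans ?_
  have hcont : Continuous (fun Y => fderiv ℝ p Y) := by
    refine continuous_clm_apply.2 fun v => ?_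
    simp only [hfd]
    exact continuous_finsetSum _ fun i _ => (isQ1_continuous (hd i)).mul continuous_const
  refine setIntegral_mono ?_ ?_ fun Y => ?_
  · exact (((isQ1_continuous (hd j)).pow 2).continuousOn.integrableOn_compact
      (isCompact_cube h)).mono_set hSc
  · exact ((hcont.norm.pow 2).continuousOn.integrableOn_compact (isCompact_cube h)).mono_set hSc
  · have h1 := (fderiv ℝ p Y).le_opNorm (EuclideanSpace.single j 1)
    rw [hdj] at h1
    simp only [Real.norm_eq_abs, PiLp.norm_single, norm_one, mul_one] at h1
    exact sq_le_sq.2 (by rwa [abs_of_nonneg (norm_nonneg _)])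

theorem fderiv_le_of_partials {p : V3 → ℝ} {X v : V3} {D : ℝ} (hv : ‖v‖ = 1)
    (hD : ∀ j, |fderiv ℝ p X (EuclideanSpace.single j 1)| ≤ D) : |fderiv ℝ p X v| ≤ 3 * D := by
  have hvs : v = ∑ j, v j • EuclideanSpace.single j (1 : ℝ) := by
    ext k; fin_cases k <;> simp [Fin.sum_univ_three]
  have hD0 : 0 ≤ D := (abs_nonneg _).trans (hD 0)
  rw [hvs, map_sum]
  refine (Finset.abs_sum_le_sum_abs _ _).trans ?_
  refine (Finset.sum_le_card_nsmul _ _ D fun j _ => ?_).trans_eq (by simp)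
  rw [map_smul, smul_eq_mul, abs_mul]
  have hvj : |v j| ≤ 1 := by
    rw [← hv]; exact PiLp.norm_apply_le v j
  calc |v j| * _ ≤ 1 * D := mul_le_mul hvj (hD j) (abs_nonneg _) zero_le_one
    _ = D := one_mul D

/-! ### The extension operator -/

/-- `∇(C_T p) = ∇p + (β⁻/β⁺ - 1) (∇p(F)·n̄) n̄`. -/
theorem fderiv_CT {p : V3 → ℝ} (hp : Differentiable ℝ p) (βm βp : ℝ) (F nbar X v : V3) :
    fderiv ℝ (CT βm βp F nbar p) X v =
      fderiv ℝ p X v + (βm / βp - 1) * fderiv ℝ p F nbar * ⟪v, nbar⟫ := by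
  have h1 : HasFDerivAt (fun Y : V3 => ⟪nbar, Y - F⟫) (innerSL ℝ nbar) X :=
    
    (innerSL ℝ nbar).hasFDerivAt.comp X ((hasFDerivAt_id (𝕜 := ℝ) X).sub_const F)
  have h2 := (hp X).hasFDerivAt.add (h1.const_mul ((βm / βp - 1) * fderiv ℝ p F nbar))
  have h3 : HasFDerivAt (CT βm βp F nbar p) (fderiv ℝ p X +
      ((βm / βp - 1) * fderiv ℝ p F nbar) • innerSL ℝ nbar) X := by
    refine h2.congr_of_eventuallyEq (Filter.Eventually.of_forall fun Y => ?_)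
    simp [CT, real_inner_comm]
  rw [h3.fderiv]
  simp [real_inner_comm]

theorem abs_fderiv_CT_le {p : V3 → ℝ} (hp : Differentiable ℝ p) {βm βp : ℝ} (hβm : 0 < βm)
    (hβ : βm ≤ βp) {F nbar X v : V3} (hn : ‖nbar‖ = 1) (hv : ‖v‖ = 1) {D : ℝ}
    (hX : |fderiv ℝ p X v| ≤ D) (hF : |fderiv ℝ p F nbar| ≤ 3 * D) :
    |fderiv ℝ (CT βm βp F nbar p) X v| ≤ 4 * D := by
  rw [fderiv_CT hp]
  have hβp : 0 < βp := hβm.trans_le hβ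
  have hr : |βm / βp - 1| ≤ 1 := by
    have h1 : βm / βp ≤ 1 := (div_le_one hβp).2 hβ
    have h2 : 0 ≤ βm / βp := by positivity
    rw [abs_le]; constructor <;> linarith
  have hi : |⟪v, nbar⟫| ≤ 1 := by
    simpa [hn, hv] using abs_real_inner_le_norm v nbar
  have : |(βm / βp - 1) * fderiv ℝ p F nbar * ⟪v, nbar⟫| ≤ 1 * (3 * D) * 1 := by
    rw [abs_mul, abs_mul]
    have hD3 : 0 ≤ 3 * D := (abs_nonneg _).trans hF
    gcongr
  linarith [abs_add_le (fderiv ℝ p X v) ((βm / βp - 1) * fderiv ℝ p F nbar * ⟪v, nbar⟫)]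

/-! ### The Hausdorff measure of a face -/

/-- A section of the cube by a coordinate plane is contained in the image of a planar square of side `h`
under a `2`-Lipschitz map; on `Fin 2 → ℝ` the measure `μH[2]` is Lebesgue measure. -/
theorem hausdorff_slab (h c : ℝ) (i : Fin 3) :
    μH[2] {X : V3 | X ∈ cube h ∧ X i = c} ≤ ENNReal.ofReal (2 * h) ^ 2 := by
  let φ : (Fin 2 → ℝ) → V3 := fun y => WithLp.toLp 2 (i.insertNth (α := fun _ => ℝ) c y)
  have hφ : LipschitzWith 2 φ := by
    refine LipschitzWith.of_dist_le_mul fun x y => ?_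
    rw [EuclideanSpace.dist_eq, Fin.sum_univ_succAbove _ i]
    simp only [φ, Fin.insertNth_apply_same, Fin.insertNth_apply_succAbove, Fin.sum_univ_two]
    apply Real.sqrt_le_iff.2 ⟨by positivity, ?_⟩
    have h0 := dist_le_pi_dist x y 0
    have h1 := dist_le_pi_dist x y 1
    have h2 : (0:ℝ) ≤ dist (x 0) (y 0) := dist_nonneg
    have h3 : (0:ℝ) ≤ dist (x 1) (y 1) := dist_nonneg
    simp only [dist_self, NNReal.coe_ofNat]
    nlinarith
  have hsub : {X : V3 | X ∈ cube h ∧ X i = c} ⊆ φ '' Icc 0 (fun _ => h) := by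
    rintro X ⟨hX, hXi⟩
    refine ⟨i.removeNth X.ofLp, ⟨fun j => (hX _).1, fun j => (hX _).2⟩, ?_⟩
    simp [φ, ← hXi]
  have hmu : (μH[2] : Measure (Fin 2 → ℝ)) = volume := by
    rw [← hausdorffMeasure_pi_real]; simp
  refine (measure_mono hsub).trans ((hφ.hausdorffMeasure_image_le (by norm_num) _).trans ?_)
  rw [hmu, Real.volume_Icc_pi, ENNReal.ofReal_mul (by norm_num)]
  simp [mul_pow]

/-! ### The trace inequality -/

/-- Trace inequality (4.6a) of Theorem 4.5 for trilinear IFE functions, in the case where the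
subelement `T⁻` carrying the coefficient `β⁻` contains a tetrahedron of uniformly comparable
volume whose closure contains `F`. -/
theorem trace_inequality_unweighted (γ : ℝ) (hγ0 : 0 < γ) (hγ1 : γ ≤ 1) :
    ∃ C : ℝ, 0 < C ∧
      ∀ (h : ℝ), 0 < h →
      ∀ (Tm Tp : Set V3), MeasurableSet Tm → MeasurableSet Tp →
        Disjoint Tm Tp → Tm ∪ Tp = cube h →
      ∀ (F nbar : V3), ‖nbar‖ = 1 →
      ∀ (βm βp : ℝ), 0 < βm → βm ≤ βp →
      (∃ P : Set V3, IsTetra P ∧ P ⊆ Tm ∧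
          ENNReal.ofReal (γ * h ^ 3) ≤ volume P ∧ F ∈ closure P) →
      ∀ (f : Set V3) (nf : V3), IsFace h f nf →
      ∀ (fm fp : Set V3), MeasurableSet fm → MeasurableSet fp →
        Disjoint fm fp → fm ∪ fp = f →
      ∀ p : V3 → ℝ, IsQ1 p →
        Real.sqrt ((∫ X in fm, (fderiv ℝ p X nf) ^ 2 ∂μH[2]) +
            ∫ X in fp, (fderiv ℝ (CT βm βp F nbar p) X nf) ^ 2 ∂μH[2]) ≤
          C * (Real.sqrt h)⁻¹ *
            Real.sqrt ((∫ X in Tm, ‖fderiv ℝ p X‖ ^ 2) +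
              ∫ X in Tp, ‖fderiv ℝ (CT βm βp F nbar p) X‖ ^ 2) := by
  set K : ℝ := (γ / 24) ^ 6 * (γ / 2) with hK
  have hKp : 0 < K := by positivity
  refine ⟨Real.sqrt (64 / K), by positivity, ?_⟩
  intro h hh Tm Tp hTm hTp hdisj hT F nbar hn βm βp hβm hβ hP f nf hf fm fp hfm hfp hfd hfu p hp
  obtain ⟨P, ⟨v, -, hPv⟩, hPT, hPvol, hFP⟩ := hP
  have hTmc : Tm ⊆ cube h := hT ▸ subset_union_left
  have hF : F ∈ cube h :=
    closure_minimal (hPT.trans hTmc) (isClosed_cube h) hFP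
  have hvol := hPvol.trans (measure_mono hPT)
  set I := ∫ X in Tm, ‖fderiv ℝ p X‖ ^ 2 with hI
  have hI0 : 0 ≤ I := integral_nonneg fun _ => sq_nonneg _
  set D := Real.sqrt (I / (K * h ^ 3)) with hD
  have hD0 : 0 ≤ D := Real.sqrt_nonneg _
  have hgrad : ∀ X ∈ cube h, ∀ j, |fderiv ℝ p X (EuclideanSpace.single j 1)| ≤ D :=
    fun X hX j => gradient_bound hγ0 hγ1 hp hh hTm hTmc hvol hX j
  have hFn := fderiv_le_of_partials hn (hgrad F hF)
  have hpd := (q1_gradient hp).1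
  obtain ⟨i, hnf, hfi⟩ := hf
  have hnf1 : ‖nf‖ = 1 := by
    rcases hnf with rfl | rfl <;> simp
  have hfc : f ⊆ cube h := by
    rcases hfi with rfl | rfl <;> exact fun X hX => hX.1
  have hfμ : μH[2] f ≤ ENNReal.ofReal (2 * h) ^ 2 := by
    rcases hfi with rfl | rfl
    · exact hausdorff_slab h 0 i
    · exact hausdorff_slab h h i
  have hpX : ∀ X ∈ f, |fderiv ℝ p X nf| ≤ D := by
    intro X hX
    rcases hnf with rfl | rfl
    · exact hgrad X (hfc hX) i
    · rw [map_neg, abs_neg]; exact hgrad X (hfc hX) i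
  have hsq : ∀ a : ℝ, |a| ≤ 4 * D → ‖a ^ 2‖ ≤ 16 * D ^ 2 := by
    intro a ha
    rw [Real.norm_eq_abs, abs_of_nonneg (sq_nonneg a), ← sq_abs]
    nlinarith [abs_nonneg a]
  have hffin : μH[2] f < ⊤ := hfμ.trans_lt (by finiteness)
  have hmf : fm ⊆ f := hfu ▸ subset_union_left
  have hpf : fp ⊆ f := hfu ▸ subset_union_right
  have e1 := norm_setIntegral_le_of_norm_le_const ((measure_mono hmf).trans_lt hffin)
    (f := fun X => (fderiv ℝ p X nf) ^ 2)
    (fun X hX => hsq _ ((hpX X (hmf hX)).trans (by linarith)))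
  have e2 := norm_setIntegral_le_of_norm_le_const ((measure_mono hpf).trans_lt hffin)
    (f := fun X => (fderiv ℝ (CT βm βp F nbar p) X nf) ^ 2)
    (fun X hX => hsq _ (abs_fderiv_CT_le hpd hβm hβ hn hnf1 (hpX X (hpf hX)) hFn))
  have e3 : (μH[2]).real fm + (μH[2]).real fp ≤ 4 * h ^ 2 := by
    rw [← measureReal_union hfd hfp ((measure_mono hmf).trans_lt hffin).ne
      ((measure_mono hpf).trans_lt hffin).ne, hfu]
    refine ENNReal.toReal_le_of_le_ofReal (by positivity) (hfμ.trans_eq ?_)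
    rw [← ENNReal.ofReal_pow (by positivity)]; congr 1; ring
  have hJ0 : 0 ≤ ∫ X in Tp, ‖fderiv ℝ (CT βm βp F nbar p) X‖ ^ 2 :=
    integral_nonneg fun _ => sq_nonneg _
  rw [← Real.sqrt_inv, ← Real.sqrt_mul (by positivity), ← Real.sqrt_mul (by positivity)]
  apply Real.sqrt_le_sqrt
  have hD2 : D ^ 2 = I / (K * h ^ 3) := Real.sq_sqrt (by positivity)
  calc _ ≤ 16 * D ^ 2 * (μH[2]).real fm + 16 * D ^ 2 * (μH[2]).real fp :=
        add_le_add ((le_abs_self _).trans e1) ((le_abs_self _).trans e2)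
    _ ≤ 16 * D ^ 2 * (4 * h ^ 2) := by
        rw [← mul_add]; gcongr
    _ = 64 / K * h⁻¹ * I := by
        rw [hD2]; field_simp; ring
    _ ≤ _ := by
        gcongr; linarith
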